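/- Let n be odd, and let C ⊆ Alt_n(F_q) with |C| ≥ 2 be such that any two distinct X, Y ∈ C satisfy rank(X − Y) ≥ 2d. Then, as rational numbers, d ≤ (n−1)/2 + (1 − |C| · q^{3−2n})/(|C| − 1). In particular, if d > (n−1)/2 − q^{3−2n}, then |C| ≤ (d − (n−1)/2 + 1)/(d − (n−1)/2 + q^{3−2n}). -/

import Mathlib

open Matrix

/-!
A Singleton-type argument: an alternating matrix is determined on an initial set of rows by its
entries to the right of the diagonal there. If all nonzero differences in the code have rank
greater than `n - 2`, then no two codewords agree on their first two rows, so
`|C| ≤ q ^ ((n - 1) + (n - 2))`. With `n = 2m + 1` and `c = q ^ (3 - 2n)`, both assertions are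
forms of `|C| * (d - m + c) ≤ d - m + 1`. Ranks being at most `n`, one has `d ≤ m`: for `d = m` the
inequality is the Singleton bound, and for `d ≤ m - 1` it follows from `c ≤ 1` and `1 ≤ |C|`.
-/

section AlternatingCode

open Finset

variable {ι R : Type*}

/-- Alternating matrices, the matrices of alternating bilinear forms. The diagonal condition rules
out symmetric matrices with nonzero diagonal in characteristic two. -/
def IsAlternating [Neg R] [Zero R] (A : Matrix ι ι R) : Prop :=
  Aᵀ = -A ∧ ∀ i, A i i = 0

namespace IsAlternating

theorem apply_swap [Neg R] [Zero R] {A : Matrix ι ι R} (hA : IsAlternating A) (i j : ι) :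
    A j i = -A i j :=
  congrFun₂ hA.1 i j

theorem sub [AddCommGroup R] {A B : Matrix ι ι R} (hA : IsAlternating A) (hB : IsAlternating B) :
    IsAlternating (A - B) :=
  ⟨by rw [transpose_sub, hA.1, hB.1, neg_sub_neg, neg_sub],
    fun i => by rw [Matrix.sub_apply, hA.2, hB.2, sub_zero]⟩

theorem nontrivial_of_ne_zero [Neg R] [Zero R] {A : Matrix ι ι R} (hA : IsAlternating A)
    (hA₀ : A ≠ 0) : Nontrivial ι := by
  by_contra hι
  rw [not_nontrivial_iff_subsingleton] at hι
  exact hA₀ (ext fun i j => Subsingleton.elim i j ▸ hA.2 i)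

theorem row_eq_zero_of_isLowerSet [LinearOrder ι] [NegZeroClass R] {A : Matrix ι ι R}
    (hA : IsAlternating A) {s : Set ι} (hs : IsLowerSet s)
    (hzero : ∀ i ∈ s, ∀ j, i < j → A i j = 0) {i : ι} (hi : i ∈ s) : A.row i = 0 := by
  funext j
  rcases lt_trichotomy i j with hij | rfl | hji
  · exact hzero i hi j hij
  · exact hA.2 i
  · rw [row_apply, hA.apply_swap j i, hzero j (hs hji.le hi) i hji, neg_zero, Pi.zero_apply]

end IsAlternating

section SingletonBound

variable [CommRing R] [Nontrivial R] [Fintype R]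

theorem card_alternatingCode_le_pow_sum_card_Ioi [Fintype ι] [LinearOrder ι]
    [LocallyFiniteOrderTop ι] {C : Set (Matrix ι ι R)} (hC : ∀ X ∈ C, IsAlternating X)
    {s : Finset ι} (hs : IsLowerSet (s : Set ι))
    (hrank : C.Pairwise fun X Y => Fintype.card ι < #s + (X - Y).rank) :
    Nat.card C ≤ Fintype.card R ^ ∑ i ∈ s, #(Ioi i) := by
  classical
  let upperEntries (X : C) (p : s.sigma Ioi) : R := X.1 p.1.1 p.1.2
  have injective_upperEntries : Function.Injective upperEntries := by
    rintro ⟨X, hX⟩ ⟨Y, hY⟩ hXY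
    by_contra hne
    have rows_eq_zero : ∀ i ∈ s, (X - Y).row i = 0 := fun i hi =>
      ((hC X hX).sub (hC Y hY)).row_eq_zero_of_isLowerSet hs
        (fun i hi j hij => sub_eq_zero.2 <|
          congrFun hXY ⟨⟨i, j⟩, mem_sigma.2 ⟨hi, mem_Ioi.2 hij⟩⟩) hi
    have rank_le : (X - Y).rank ≤ #sᶜ :=
      rank_le_card_of_support_subset _ _ fun i hi =>
        mem_coe.2 <| mem_compl.2 fun his => hi (rows_eq_zero i his)
    have := hrank hX hY fun h => hne (Subtype.ext h)
    have := card_add_card_compl s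
    lia
  calc
    Nat.card C ≤ Nat.card (s.sigma Ioi → R) :=
      Nat.card_le_card_of_injective upperEntries injective_upperEntries
    _ = Fintype.card R ^ ∑ i ∈ s, #(Ioi i) := by
      rw [Nat.card_fun, Nat.card_eq_fintype_card, Nat.card_eq_fintype_card, Fintype.card_coe,
        card_sigma]

theorem card_alternatingCode_le_pow_sum_range {n r : ℕ} (hr : r ≤ n)
    {C : Set (Matrix (Fin n) (Fin n) R)} (hC : ∀ X ∈ C, IsAlternating X)
    (hrank : C.Pairwise fun X Y => n < r + (X - Y).rank) :
    Nat.card C ≤ Fintype.card R ^ ∑ i ∈ range r, (n - 1 - i) := by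
  have isLowerSet_firstRows : IsLowerSet (univ.map (Fin.castLEEmb hr) : Set (Fin n)) := by
    rintro _ j hj hi
    obtain ⟨i, -, rfl⟩ := mem_map.1 (mem_coe.1 hi)
    exact mem_coe.2 <| mem_map.2 ⟨⟨j, (Fin.le_def.1 hj).trans_lt i.2⟩, mem_univ _, rfl⟩
  have card_le :=
    card_alternatingCode_le_pow_sum_card_Ioi hC isLowerSet_firstRows (by simpa using hrank)
  simpa [Fin.sum_univ_eq_sum_range fun i => n - 1 - i] using card_le

end SingletonBound

theorem mul_add_le_add_one_of_le_neg_one {K : Type*} [Ring K] [PartialOrder K] [IsOrderedRing K]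
    {N x c : K} (hN : 1 ≤ N) (hx : x ≤ -1) (hc : c ≤ 1) : N * (x + c) ≤ x + 1 :=
  calc
    N * (x + c) ≤ N * (x + 1) :=
      mul_le_mul_of_nonneg_left (by gcongr) (zero_le_one.trans hN)
    _ ≤ 1 * (x + 1) := mul_le_mul_of_nonpos_right hN (le_neg_iff_add_nonpos_right.1 hx)
    _ = x + 1 := one_mul _

theorem card_alternatingCode_mul_le_of_odd [CommRing R] [Fintype R] {n d : ℕ} (hn : Odd n)
    {C : Set (Matrix (Fin n) (Fin n) R)} (hC : ∀ X ∈ C, IsAlternating X) (hcard : 2 ≤ Nat.card C)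
    (hdist : C.Pairwise fun X Y => 2 * d ≤ (X - Y).rank) :
    (Nat.card C : ℚ) *
        ((d : ℚ) - ((n : ℚ) - 1) / 2 + (Fintype.card R : ℚ) ^ ((3 : ℤ) - 2 * (n : ℤ))) ≤
      (d : ℚ) - ((n : ℚ) - 1) / 2 + 1 := by
  have : Nontrivial C := Finite.one_lt_card_iff_nontrivial.1 hcard
  obtain ⟨X, hX, Y, hY, hne⟩ := Set.nontrivial_coe_sort.1 this
  have : Nontrivial R := by
    by_contra hR
    rw [not_nontrivial_iff_subsingleton] at hR
    exact hne (Subsingleton.elim X Y)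
  have : Nontrivial (Fin n) := ((hC X hX).sub (hC Y hY)).nontrivial_of_ne_zero (sub_ne_zero.2 hne)
  have two_le_n : 2 ≤ n := Fin.nontrivial_iff_two_le.1 this
  have two_mul_d_le : 2 * d ≤ n := (hdist hX hY hne).trans (rank_le_width _)
  obtain ⟨m, rfl⟩ := hn
  have zpow_eq : (Fintype.card R : ℚ) ^ ((3 : ℤ) - 2 * ((2 * m + 1 : ℕ) : ℤ)) =
      ((Fintype.card R : ℚ) ^ (4 * m - 1))⁻¹ := by
    rw [← _root_.zpow_natCast, ← _root_.zpow_neg]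
    congr 1
    lia
  have half_eq : (((2 * m + 1 : ℕ) : ℚ) - 1) / 2 = m := by push_cast; ring
  rw [zpow_eq, half_eq]
  rcases (by lia : d = m ∨ d + 1 ≤ m) with rfl | hdm
  · have singleton_bound : Nat.card C ≤ Fintype.card R ^ (4 * d - 1) := by
      convert card_alternatingCode_le_pow_sum_range two_le_n hC
        (hdist.mono' fun X Y (h : 2 * d ≤ (X - Y).rank) => by lia) using 2
      simp only [sum_range_succ, sum_range_zero]
      lia
    rw [sub_self, zero_add, zero_add]
    exact mul_inv_le_one_of_le₀ (mod_cast singleton_bound) (by positivity)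
  · have hdm' : (d : ℚ) + 1 ≤ m := mod_cast hdm
    exact mul_add_le_add_one_of_le_neg_one (mod_cast one_le_two.trans hcard) (by linarith)
      (inv_le_one_of_one_le₀ (one_le_pow₀ (mod_cast Fintype.card_pos)))

theorem total_distance_bound_odd_general [CommRing R] [Fintype R] {n d : ℕ} (hn : Odd n)
    {C : Set (Matrix (Fin n) (Fin n) R)} (hC : ∀ X ∈ C, IsAlternating X) (hcard : 2 ≤ Nat.card C)
    (hdist : C.Pairwise fun X Y => 2 * d ≤ (X - Y).rank) :
    ((d : ℚ) ≤ ((n : ℚ) - 1) / 2 +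
        (1 - (Nat.card C : ℚ) * (Fintype.card R : ℚ) ^ ((3 : ℤ) - 2 * (n : ℤ))) /
          ((Nat.card C : ℚ) - 1)) ∧
    (((n : ℚ) - 1) / 2 - (Fintype.card R : ℚ) ^ ((3 : ℤ) - 2 * (n : ℤ)) < (d : ℚ) →
      (Nat.card C : ℚ) ≤
        ((d : ℚ) - ((n : ℚ) - 1) / 2 + 1) /
          ((d : ℚ) - ((n : ℚ) - 1) / 2 + (Fintype.card R : ℚ) ^ ((3 : ℤ) - 2 * (n : ℤ)))) := by
  have card_mul_le := card_alternatingCode_mul_le_of_odd hn hC hcard hdist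
  have one_lt_card : (1 : ℚ) < Nat.card C := mod_cast hcard
  refine ⟨?_, fun hd => ?_⟩
  · rw [← sub_le_iff_le_add', le_div_iff₀ (by linarith)]
    linarith
  · rwa [le_div_iff₀ (by linarith)]

end AlternatingCode

/-- Total distance bound, `n` odd: if `C ⊆ Alt_n(F_q)` has `|C| ≥ 2` and any two distinct
codewords are at rank distance at least `2d`, then
`d ≤ (n−1)/2 + (1 − |C|·q^{3−2n})/(|C| − 1)`; in particular, if `d > (n−1)/2 − q^{3−2n}`
then `|C| ≤ (d − (n−1)/2 + 1)/(d − (n−1)/2 + q^{3−2n})`. -/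
theorem total_distance_bound_odd
    {F : Type*} [Field F] [Fintype F] {n d : ℕ} (hn : Odd n)
    (C : Set (Matrix (Fin n) (Fin n) F))
    (hCalt : ∀ X ∈ C, Xᵀ = -X ∧ ∀ i, X i i = 0)
    (hcard : 2 ≤ Nat.card C)
    (hdist : ∀ X ∈ C, ∀ Y ∈ C, X ≠ Y → 2 * d ≤ (X - Y).rank) :
    ((d : ℚ) ≤ ((n : ℚ) - 1) / 2 +
        (1 - (Nat.card C : ℚ) * (Fintype.card F : ℚ) ^ ((3 : ℤ) - 2 * (n : ℤ))) /
          ((Nat.card C : ℚ) - 1)) ∧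
    (((n : ℚ) - 1) / 2 - (Fintype.card F : ℚ) ^ ((3 : ℤ) - 2 * (n : ℤ)) < (d : ℚ) →
      (Nat.card C : ℚ) ≤
        ((d : ℚ) - ((n : ℚ) - 1) / 2 + 1) /
          ((d : ℚ) - ((n : ℚ) - 1) / 2 + (Fintype.card F : ℚ) ^ ((3 : ℤ) - 2 * (n : ℤ)))) :=
  total_distance_bound_odd_general hn hCalt hcard fun X hX Y hY => hdist X hX Y hY
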